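/- arXiv:1406.0810 — 3 statements merged into one kernel-verified Lean document; each statement's English description precedes it below -/
import Mathlib

section
/- Well-definedness and injectivity of the comparison map between generalized Baer differences: in the setup below, the assignment (u,v) ↦ (f₁(u), f₂(v)) maps H₁ into H₂, sends D₁ into D₂, and hence induces a well-defined R-linear map F : 𝔹₁ → 𝔹₂; moreover F is injective. -/
open Submodule

section

variable {R : Type*} [Ring R]

/-- The fiber product `{(x,y) : q₁ x = q₂ y}` of two linear maps with common target,
as a submodule of the product. -/
abbrev fiberProd {M1 M2 M3 : Type*}
    [AddCommGroup M1] [Module R M1] [AddCommGroup M2] [Module R M2]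
    [AddCommGroup M3] [Module R M3]
    (q1 : M1 →ₗ[R] M3) (q2 : M2 →ₗ[R] M3) : Submodule R (M1 × M2) :=
  LinearMap.ker (q1.comp (LinearMap.fst R M1 M2) - q2.comp (LinearMap.snd R M1 M2))

/-- The "diagonal" image `{(ι₁ a, ι₂ a) : a}` of two linear maps with common source,
as a submodule of the product. -/
abbrev diagIm {C M1 M2 : Type*}
    [AddCommGroup C] [Module R C] [AddCommGroup M1] [Module R M1]
    [AddCommGroup M2] [Module R M2]
    (ι1 : C →ₗ[R] M1) (ι2 : C →ₗ[R] M2) : Submodule R (M1 × M2) :=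
  LinearMap.range (ι1.prod ι2)

/-- The (generalized) Baer difference: the fiber product of `q₁, q₂` modulo the
diagonal image of `ι₁, ι₂`. -/
abbrev baerQuot {C M1 M2 M3 : Type*}
    [AddCommGroup C] [Module R C] [AddCommGroup M1] [Module R M1]
    [AddCommGroup M2] [Module R M2] [AddCommGroup M3] [Module R M3]
    (q1 : M1 →ₗ[R] M3) (q2 : M2 →ₗ[R] M3)
    (ι1 : C →ₗ[R] M1) (ι2 : C →ₗ[R] M2) : Type _ :=
  fiberProd q1 q2 ⧸ Submodule.comap (fiberProd q1 q2).subtype (diagIm ι1 ι2)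

/-- Well-definedness and injectivity of the comparison map between generalized Baer
differences: `(u,v) ↦ (f₁ u, f₂ v)` maps `H₁` into `H₂`, sends `D₁` into `D₂`, and
induces a well-defined injective `R`-linear map `F : 𝔹₁ → 𝔹₂`. -/
theorem baer_comparison_welldefined_injective
    {A1 C1 B3 B11 B12 B21 B22 : Type*}
    [AddCommGroup A1] [Module R A1] [AddCommGroup C1] [Module R C1]
    [AddCommGroup B3] [Module R B3] [AddCommGroup B11] [Module R B11]
    [AddCommGroup B12] [Module R B12] [AddCommGroup B21] [Module R B21]
    [AddCommGroup B22] [Module R B22]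
    (i1 : A1 →ₗ[R] B11) (i2 : A1 →ₗ[R] B12)
    (π1 : B11 →ₗ[R] C1) (π2 : B12 →ₗ[R] C1)
    (f1 : B11 →ₗ[R] B21) (f2 : B12 →ₗ[R] B22)
    (p1 : B21 →ₗ[R] B3) (p2 : B22 →ₗ[R] B3)
    (hi1 : Function.Injective i1) (hi2 : Function.Injective i2)
    (hπ1 : Function.Surjective π1) (hπ2 : Function.Surjective π2)
    (hext1 : LinearMap.ker π1 = LinearMap.range i1)
    (hext2 : LinearMap.ker π2 = LinearMap.range i2)
    (hf1 : Function.Injective f1) (hf2 : Function.Injective f2)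
    (hp1 : Function.Surjective p1) (hp2 : Function.Surjective p2)
    (hexb1 : LinearMap.ker p1 = LinearMap.range f1)
    (hexb2 : LinearMap.ker p2 = LinearMap.range f2) :
    (∀ x : fiberProd π1 π2, (f1 x.1.1, f2 x.1.2) ∈ fiberProd p1 p2) ∧
    (∀ x : B11 × B12, x ∈ diagIm i1 i2 →
        (f1 x.1, f2 x.2) ∈ diagIm (f1.comp i1) (f2.comp i2)) ∧
    (∃ F : baerQuot π1 π2 i1 i2 →ₗ[R] baerQuot p1 p2 (f1.comp i1) (f2.comp i2),
      Function.Injective F ∧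
      ∀ (x : fiberProd π1 π2) (hx : (f1 x.1.1, f2 x.1.2) ∈ fiberProd p1 p2),
        F (Submodule.Quotient.mk x)
          = Submodule.Quotient.mk (⟨(f1 x.1.1, f2 x.1.2), hx⟩ : fiberProd p1 p2)) := by
  have h1 : ∀ x : fiberProd π1 π2, (f1 x.1.1, f2 x.1.2) ∈ fiberProd p1 p2 := by
    intro x
    have e1 : p1 (f1 x.1.1) = 0 := by
      rw [← LinearMap.mem_ker, hexb1]; exact ⟨_, rfl⟩
    have e2 : p2 (f2 x.1.2) = 0 := by
      rw [← LinearMap.mem_ker, hexb2]; exact ⟨_, rfl⟩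
    simp [LinearMap.mem_ker, e1, e2]
  have h2 : ∀ x : B11 × B12, x ∈ diagIm i1 i2 →
        (f1 x.1, f2 x.2) ∈ diagIm (f1.comp i1) (f2.comp i2) := by
    rintro x ⟨a, rfl⟩
    exact ⟨a, rfl⟩
  let G : fiberProd π1 π2 →ₗ[R] fiberProd p1 p2 :=
    LinearMap.codRestrict _ ((f1.prodMap f2).comp (fiberProd π1 π2).subtype) h1
  refine ⟨h1, h2, Submodule.mapQ _ _ G (fun x hx => h2 x.1 hx), ?_, ?_⟩
  · rw [← LinearMap.ker_eq_bot, LinearMap.ker_eq_bot']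
    intro m hm
    obtain ⟨x, rfl⟩ := Submodule.Quotient.mk_surjective _ m
    have hm' := (Submodule.Quotient.mk_eq_zero
      (Submodule.comap (fiberProd p1 p2).subtype (diagIm (f1.comp i1) (f2.comp i2)))
      (x := G x)).1 hm
    refine (Submodule.Quotient.mk_eq_zero _).2 ?_
    obtain ⟨a, ha⟩ := hm'
    refine ⟨a, Prod.ext (hf1 ?_) (hf2 ?_)⟩
    · exact congrArg Prod.fst ha
    · exact congrArg Prod.snd ha
  · intro x hx
    rfl

end
end

section
/- Rabi's exactness lemma for the generalized Baer difference: in the setup below, let 𝔽 = 𝔹₂ / F(𝔹₁), where F : 𝔹₁ → 𝔹₂ is the injective map induced by (u,v) ↦ (f₁(u), f₂(v)). Then: (i) the assignment (x,y) ↦ p₁(x) on H₂ descends to a well-defined R-linear map p̄ : 𝔽 → B₃, and p̄ is surjective; (ii) there is a unique R-linear map φ : C₁ → 𝔽 such that φ(π₁(u) − π₂(v)) equals the class of (f₁(u), f₂(v)) in 𝔽 for all u ∈ B₁¹ and v ∈ B₁²; (iii) φ is injective and its image equals the kernel of p̄. In other words, the sequence 0 → C₁ →(φ) 𝔽 →(p̄)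 B₃ → 0 is a short exact sequence of R-modules. -/
open Submodule

section

variable {R : Type*} [Ring R]

/-- The image `F(𝔹₁) ⊆ 𝔹₂` of the comparison map `F : 𝔹₁ → 𝔹₂`,
`[(u,v)] ↦ [(f₁ u, f₂ v)]`, as a submodule of `𝔹₂ = baerQuot p1 p2 (f1 ∘ i1) (f2 ∘ i2)`. -/
abbrev imComparison {A1 C1 B3 B11 B12 B21 B22 : Type*}
    [AddCommGroup A1] [Module R A1] [AddCommGroup C1] [Module R C1]
    [AddCommGroup B3] [Module R B3] [AddCommGroup B11] [Module R B11]
    [AddCommGroup B12] [Module R B12] [AddCommGroup B21] [Module R B21]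
    [AddCommGroup B22] [Module R B22]
    (i1 : A1 →ₗ[R] B11) (i2 : A1 →ₗ[R] B12)
    (π1 : B11 →ₗ[R] C1) (π2 : B12 →ₗ[R] C1)
    (f1 : B11 →ₗ[R] B21) (f2 : B12 →ₗ[R] B22)
    (p1 : B21 →ₗ[R] B3) (p2 : B22 →ₗ[R] B3) :
    Submodule R (baerQuot p1 p2 (f1.comp i1) (f2.comp i2)) :=
  Submodule.map
    (Submodule.comap (fiberProd p1 p2).subtype (diagIm (f1.comp i1) (f2.comp i2))).mkQ
    (Submodule.comap (fiberProd p1 p2).subtype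
      (Submodule.map (f1.prodMap f2) (fiberProd π1 π2)))

/-- `𝔽 = 𝔹₂ / F(𝔹₁)`, the quotient of the generalized Baer difference `𝔹₂` by the
image of the (injective) comparison map `F : 𝔹₁ → 𝔹₂`. -/
abbrev rabiF {A1 C1 B3 B11 B12 B21 B22 : Type*}
    [AddCommGroup A1] [Module R A1] [AddCommGroup C1] [Module R C1]
    [AddCommGroup B3] [Module R B3] [AddCommGroup B11] [Module R B11]
    [AddCommGroup B12] [Module R B12] [AddCommGroup B21] [Module R B21]
    [AddCommGroup B22] [Module R B22]
    (i1 : A1 →ₗ[R] B11) (i2 : A1 →ₗ[R] B12)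
    (π1 : B11 →ₗ[R] C1) (π2 : B12 →ₗ[R] C1)
    (f1 : B11 →ₗ[R] B21) (f2 : B12 →ₗ[R] B22)
    (p1 : B21 →ₗ[R] B3) (p2 : B22 →ₗ[R] B3) : Type _ :=
  baerQuot p1 p2 (f1.comp i1) (f2.comp i2) ⧸ imComparison i1 i2 π1 π2 f1 f2 p1 p2

/-- Rabi's exactness lemma: the sequence `0 → C₁ →(φ) 𝔽 →(p̄) B₃ → 0` is a short
exact sequence, where `p̄[[(x,y)]] = p₁ x` and `φ(π₁ u − π₂ v) = [[(f₁ u, f₂ v)]]`. -/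
theorem rabi_exactness
    {A1 C1 B3 B11 B12 B21 B22 : Type*}
    [AddCommGroup A1] [Module R A1] [AddCommGroup C1] [Module R C1]
    [AddCommGroup B3] [Module R B3] [AddCommGroup B11] [Module R B11]
    [AddCommGroup B12] [Module R B12] [AddCommGroup B21] [Module R B21]
    [AddCommGroup B22] [Module R B22]
    (i1 : A1 →ₗ[R] B11) (i2 : A1 →ₗ[R] B12)
    (π1 : B11 →ₗ[R] C1) (π2 : B12 →ₗ[R] C1)
    (f1 : B11 →ₗ[R] B21) (f2 : B12 →ₗ[R] B22)
    (p1 : B21 →ₗ[R] B3) (p2 : B22 →ₗ[R] B3)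
    (hi1 : Function.Injective i1) (hi2 : Function.Injective i2)
    (hπ1 : Function.Surjective π1) (hπ2 : Function.Surjective π2)
    (hext1 : LinearMap.ker π1 = LinearMap.range i1)
    (hext2 : LinearMap.ker π2 = LinearMap.range i2)
    (hf1 : Function.Injective f1) (hf2 : Function.Injective f2)
    (hp1 : Function.Surjective p1) (hp2 : Function.Surjective p2)
    (hexb1 : LinearMap.ker p1 = LinearMap.range f1)
    (hexb2 : LinearMap.ker p2 = LinearMap.range f2) :
    ∃ pbar : rabiF i1 i2 π1 π2 f1 f2 p1 p2 →ₗ[R] B3,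
      (∀ z : fiberProd p1 p2,
        pbar (Submodule.Quotient.mk (Submodule.Quotient.mk z)) = p1 z.1.1) ∧
      Function.Surjective pbar ∧
      ∃ φ : C1 →ₗ[R] rabiF i1 i2 π1 π2 f1 f2 p1 p2,
        (∀ (u : B11) (v : B12) (h : (f1 u, f2 v) ∈ fiberProd p1 p2),
          φ (π1 u - π2 v)
            = Submodule.Quotient.mk
                (Submodule.Quotient.mk (⟨(f1 u, f2 v), h⟩ : fiberProd p1 p2))) ∧
        (∀ φ' : C1 →ₗ[R] rabiF i1 i2 π1 π2 f1 f2 p1 p2,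
          (∀ (u : B11) (v : B12) (h : (f1 u, f2 v) ∈ fiberProd p1 p2),
            φ' (π1 u - π2 v)
              = Submodule.Quotient.mk
                  (Submodule.Quotient.mk (⟨(f1 u, f2 v), h⟩ : fiberProd p1 p2))) →
          φ' = φ) ∧
        Function.Injective φ ∧
        LinearMap.range φ = LinearMap.ker pbar := by
  have hπi1 : ∀ a, π1 (i1 a) = 0 := fun a => by
    have : i1 a ∈ LinearMap.ker π1 := hext1 ▸ LinearMap.mem_range_self i1 a
    exact this
  have hπi2 : ∀ a, π2 (i2 a) = 0 := fun a => by
    have : i2 a ∈ LinearMap.ker π2 := hext2 ▸ LinearMap.mem_range_self i2 a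
    exact this
  have hpf1 : ∀ a, p1 (f1 a) = 0 := fun a => by
    have : f1 a ∈ LinearMap.ker p1 := hexb1 ▸ LinearMap.mem_range_self f1 a
    exact this
  have hpf2 : ∀ a, p2 (f2 a) = 0 := fun a => by
    have : f2 a ∈ LinearMap.ker p2 := hexb2 ▸ LinearMap.mem_range_self f2 a
    exact this
  have memH : ∀ z : B21 × B22, z ∈ fiberProd p1 p2 ↔ p1 z.1 = p2 z.2 := fun z => by
    simp [fiberProd, sub_eq_zero]
  let q : fiberProd p1 p2 →ₗ[R] rabiF i1 i2 π1 π2 f1 f2 p1 p2 :=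
    (imComparison i1 i2 π1 π2 f1 f2 p1 p2).mkQ.comp
      (Submodule.comap (fiberProd p1 p2).subtype (diagIm (f1.comp i1) (f2.comp i2))).mkQ
  have hqdef : ∀ z, q z = Submodule.Quotient.mk (Submodule.Quotient.mk z) := fun z => rfl
  have hqs : Function.Surjective q :=
    (Submodule.mkQ_surjective _).comp (Submodule.mkQ_surjective _)
  have hq : ∀ z : fiberProd p1 p2, q z = 0 ↔
      ∃ u v, π1 u = π2 v ∧ f1 u = z.1.1 ∧ f2 v = z.1.2 := by
    intro z
    rw [hqdef, Submodule.Quotient.mk_eq_zero]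
    constructor
    · rintro ⟨w, ⟨⟨u, v⟩, huv, hw⟩, hwz⟩
      rw [Submodule.mkQ_apply, Submodule.Quotient.eq] at hwz
      obtain ⟨a, ha⟩ := hwz
      have huv' : π1 u = π2 v := by simpa [fiberProd, sub_eq_zero] using huv
      have hw1 : f1 u = w.1.1 := congrArg Prod.fst hw
      have hw2 : f2 v = w.1.2 := congrArg Prod.snd hw
      have ha1 : f1 (i1 a) = w.1.1 - z.1.1 := congrArg Prod.fst ha
      have ha2 : f2 (i2 a) = w.1.2 - z.1.2 := congrArg Prod.snd ha
      refine ⟨u - i1 a, v - i2 a, ?_, ?_, ?_⟩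
      · rw [map_sub, map_sub, hπi1, hπi2, huv']
      · rw [map_sub, hw1, ha1]; abel
      · rw [map_sub, hw2, ha2]; abel
    · rintro ⟨u, v, huv, h1, h2⟩
      refine ⟨z, ⟨(u, v), ?_, ?_⟩, rfl⟩
      · simp [fiberProd, sub_eq_zero, huv]
      · exact Prod.ext h1 h2
  let P : fiberProd p1 p2 →ₗ[R] B3 :=
    (p1.comp (LinearMap.fst R B21 B22)).comp (fiberProd p1 p2).subtype
  have hP : ∀ z, P z = p1 z.1.1 := fun z => rfl
  have hker : LinearMap.ker q ≤ LinearMap.ker P := by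
    intro z hz
    obtain ⟨u, v, -, h1, -⟩ := (hq z).1 hz
    rw [LinearMap.mem_ker, hP, ← h1, hpf1]
  let pbar := ((LinearMap.ker q).liftQ P hker).comp
    (q.quotKerEquivOfSurjective hqs).symm.toLinearMap
  have hpbar : ∀ z, pbar (q z) = p1 z.1.1 := by
    intro z
    have : (q.quotKerEquivOfSurjective hqs).symm (q z) = Submodule.Quotient.mk z := by
      rw [LinearEquiv.symm_apply_eq]; rfl
    change (LinearMap.ker q).liftQ P hker ((q.quotKerEquivOfSurjective hqs).symm (q z)) = _
    rw [this]; rfl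
  let j : B11 × B12 →ₗ[R] fiberProd p1 p2 :=
    (f1.prodMap f2).codRestrict (fiberProd p1 p2) (fun w => by
      rw [memH]; simp [hpf1, hpf2])
  let g : B11 × B12 →ₗ[R] C1 :=
    π1.comp (LinearMap.fst R B11 B12) - π2.comp (LinearMap.snd R B11 B12)
  have hg : ∀ w, g w = π1 w.1 - π2 w.2 := fun w => rfl
  have hgs : Function.Surjective g := fun c => by
    obtain ⟨u, rfl⟩ := hπ1 c
    exact ⟨(u, 0), by simp [hg]⟩
  have hjq : ∀ w, q (j w) = 0 ↔ g w = 0 := by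
    intro w
    rw [hq, hg, sub_eq_zero]
    constructor
    · rintro ⟨u, v, huv, h1, h2⟩
      rw [← hf1 (show f1 u = f1 w.1 from h1), ← hf2 (show f2 v = f2 w.2 from h2), huv]
    · exact fun h => ⟨w.1, w.2, h, rfl, rfl⟩
  have hker2 : LinearMap.ker g ≤ LinearMap.ker (q.comp j) := fun w hw => (hjq w).2 hw
  let φ := ((LinearMap.ker g).liftQ (q.comp j) hker2).comp
    (g.quotKerEquivOfSurjective hgs).symm.toLinearMap
  have hφ : ∀ w, φ (g w) = q (j w) := by
    intro w
    have : (g.quotKerEquivOfSurjective hgs).symm (g w) = Submodule.Quotient.mk w := by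
      rw [LinearEquiv.symm_apply_eq]; rfl
    change (LinearMap.ker g).liftQ (q.comp j) hker2
      ((g.quotKerEquivOfSurjective hgs).symm (g w)) = _
    rw [this]; rfl
  refine ⟨pbar, hpbar, ?_, φ, fun u v h => hφ (u, v), ?_, ?_, ?_⟩
  · intro b
    obtain ⟨x, rfl⟩ := hp1 b
    obtain ⟨y, hy⟩ := hp2 (p1 x)
    exact ⟨q ⟨(x, y), (memH _).2 hy.symm⟩, hpbar _⟩
  · intro φ' h'
    ext c
    obtain ⟨w, rfl⟩ := hgs c
    rw [hφ]
    exact h' w.1 w.2 (j w).2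
  · rw [injective_iff_map_eq_zero]
    intro c hc
    obtain ⟨w, rfl⟩ := hgs c
    rw [hφ] at hc
    exact (hjq w).1 hc
  · ext t
    constructor
    · rintro ⟨c, rfl⟩
      obtain ⟨w, rfl⟩ := hgs c
      rw [LinearMap.mem_ker, hφ, hpbar]
      exact hpf1 w.1
    · intro ht
      obtain ⟨z, rfl⟩ := hqs t
      rw [LinearMap.mem_ker, hpbar] at ht
      have ht2 : p2 z.1.2 = 0 := by rw [← (memH _).1 z.2, ht]
      obtain ⟨u, hu⟩ : z.1.1 ∈ LinearMap.range f1 := hexb1 ▸ ht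
      obtain ⟨v, hv⟩ : z.1.2 ∈ LinearMap.range f2 := hexb2 ▸ ht2
      refine ⟨g (u, v), ?_⟩
      rw [hφ]
      congr 1
      exact Subtype.ext (Prod.ext hu hv)

end
end

section
/- The extension arising from the generalized Baer difference is the Baer difference of the pushforward extensions: in the setup below, let 𝔽 = 𝔹₂ / F(𝔹₁) with its maps φ : C₁ → 𝔽 and p̄ : 𝔽 → B₃ from Rabi's exactness lemma. For j = 1, 2 define the pushforward extension E_j = (C₁ × B₂ʲ)/N_j, where N_j = {(π_j(u), −f_j(u)) : u ∈ B₁ʲ}, with the well-defined maps ι_j : C₁ → E_j, ι_j(c) = [(c, 0)], and q_j : E_j → B₃, q_j([(c, x)]) = p_j(x). Define the Baer difference G = {(e₁, e₂) ∈ E₁ × E₂ : q₁(e₁) = q₂(e₂)} / {(ι₁(c), ι₂(c)) : c ∈ C₁}, with maps ι : C₁ → G, ι(c) = [(ι₁(c), 0)], and q : G → B₃, q([(e₁, e₂)]) = q₁(e₁). Then there exists an R-module isomorphism θ : 𝔽 → G satisfying θ ∘ φ = ι and q ∘ θ = p̄; that is, the extension 0 → C₁ → 𝔽 → B₃ → 0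 is congruent to the Baer difference of the pushforwards of the two given extensions 0 → B₁ʲ → B₂ʲ → B₃ → 0 along π_j. -/
open Submodule

section

variable {R : Type*} [Ring R]

/-- The submodule `N_j = {(π u, −f u) : u}` of `C₁ × B₂ʲ` used to form the pushforward
extension `E_j = (C₁ × B₂ʲ)/N_j`. -/
abbrev pushN {C1 B1 B2 : Type*}
    [AddCommGroup C1] [Module R C1] [AddCommGroup B1] [Module R B1]
    [AddCommGroup B2] [Module R B2]
    (π : B1 →ₗ[R] C1) (f : B1 →ₗ[R] B2) : Submodule R (C1 × B2) :=
  LinearMap.range (π.prod (-f))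

/-- The pushforward extension `E_j = (C₁ × B₂ʲ)/N_j`. -/
abbrev pushE {C1 B1 B2 : Type*}
    [AddCommGroup C1] [Module R C1] [AddCommGroup B1] [Module R B1]
    [AddCommGroup B2] [Module R B2]
    (π : B1 →ₗ[R] C1) (f : B1 →ₗ[R] B2) : Type _ :=
  (C1 × B2) ⧸ pushN π f

/-- The extension `0 → C₁ → 𝔽 → B₃ → 0` arising from the generalized Baer difference
is the Baer difference of the pushforward extensions: there are maps
`ι_j : C₁ → E_j`, `ι_j c = [(c,0)]`, and `q_j : E_j → B₃`, `q_j [(c,x)] = p_j x`, and an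
isomorphism `θ : 𝔽 ≃ G` onto the Baer difference `G` of the pushforwards, with
`θ ∘ φ = ι` and `q ∘ θ = p̄`. -/
theorem rabiF_is_baer_difference_of_pushforwards
    {A1 C1 B3 B11 B12 B21 B22 : Type*}
    [AddCommGroup A1] [Module R A1] [AddCommGroup C1] [Module R C1]
    [AddCommGroup B3] [Module R B3] [AddCommGroup B11] [Module R B11]
    [AddCommGroup B12] [Module R B12] [AddCommGroup B21] [Module R B21]
    [AddCommGroup B22] [Module R B22]
    (i1 : A1 →ₗ[R] B11) (i2 : A1 →ₗ[R] B12)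
    (π1 : B11 →ₗ[R] C1) (π2 : B12 →ₗ[R] C1)
    (f1 : B11 →ₗ[R] B21) (f2 : B12 →ₗ[R] B22)
    (p1 : B21 →ₗ[R] B3) (p2 : B22 →ₗ[R] B3)
    (hi1 : Function.Injective i1) (hi2 : Function.Injective i2)
    (hπ1 : Function.Surjective π1) (hπ2 : Function.Surjective π2)
    (hext1 : LinearMap.ker π1 = LinearMap.range i1)
    (hext2 : LinearMap.ker π2 = LinearMap.range i2)
    (hf1 : Function.Injective f1) (hf2 : Function.Injective f2)
    (hp1 : Function.Surjective p1) (hp2 : Function.Surjective p2)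
    (hexb1 : LinearMap.ker p1 = LinearMap.range f1)
    (hexb2 : LinearMap.ker p2 = LinearMap.range f2)
    (pbar : rabiF i1 i2 π1 π2 f1 f2 p1 p2 →ₗ[R] B3)
    (hpbar : ∀ z : fiberProd p1 p2,
      pbar (Submodule.Quotient.mk (Submodule.Quotient.mk z)) = p1 z.1.1)
    (φ : C1 →ₗ[R] rabiF i1 i2 π1 π2 f1 f2 p1 p2)
    (hφ : ∀ (u : B11) (v : B12) (h : (f1 u, f2 v) ∈ fiberProd p1 p2),
      φ (π1 u - π2 v)
        = Submodule.Quotient.mk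
            (Submodule.Quotient.mk (⟨(f1 u, f2 v), h⟩ : fiberProd p1 p2))) :
    ∃ (ι1 : C1 →ₗ[R] pushE π1 f1) (ι2 : C1 →ₗ[R] pushE π2 f2)
      (q1 : pushE π1 f1 →ₗ[R] B3) (q2 : pushE π2 f2 →ₗ[R] B3),
      (∀ c : C1, ι1 c = Submodule.Quotient.mk (c, (0 : B21))) ∧
      (∀ c : C1, ι2 c = Submodule.Quotient.mk (c, (0 : B22))) ∧
      (∀ (c : C1) (x : B21), q1 (Submodule.Quotient.mk (c, x)) = p1 x) ∧
      (∀ (c : C1) (x : B22), q2 (Submodule.Quotient.mk (c, x)) = p2 x) ∧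
      ∃ θ : rabiF i1 i2 π1 π2 f1 f2 p1 p2 ≃ₗ[R] baerQuot q1 q2 ι1 ι2,
        (∀ (c : C1) (h : (ι1 c, (0 : pushE π2 f2)) ∈ fiberProd q1 q2),
          θ (φ c)
            = Submodule.Quotient.mk
                (⟨(ι1 c, (0 : pushE π2 f2)), h⟩ : fiberProd q1 q2)) ∧
        ∃ q : baerQuot q1 q2 ι1 ι2 →ₗ[R] B3,
          (∀ z : fiberProd q1 q2, q (Submodule.Quotient.mk z) = q1 z.1.1) ∧
          (∀ x : rabiF i1 i2 π1 π2 f1 f2 p1 p2, q (θ x) = pbar x) := by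
  have pf1 : ∀ u, p1 (f1 u) = 0 := fun u => by
    have : f1 u ∈ LinearMap.ker p1 := by rw [hexb1]; exact ⟨u, rfl⟩
    exact this
  have pf2 : ∀ u, p2 (f2 u) = 0 := fun u => by
    have : f2 u ∈ LinearMap.ker p2 := by rw [hexb2]; exact ⟨u, rfl⟩
    exact this
  have pi1 : ∀ a, π1 (i1 a) = 0 := fun a => by
    have : i1 a ∈ LinearMap.ker π1 := by rw [hext1]; exact ⟨a, rfl⟩
    exact this
  have pi2 : ∀ a, π2 (i2 a) = 0 := fun a => by
    have : i2 a ∈ LinearMap.ker π2 := by rw [hext2]; exact ⟨a, rfl⟩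
    exact this
  let ι1 : C1 →ₗ[R] pushE π1 f1 := (pushN π1 f1).mkQ.comp (LinearMap.inl R C1 B21)
  let ι2 : C1 →ₗ[R] pushE π2 f2 := (pushN π2 f2).mkQ.comp (LinearMap.inl R C1 B22)
  let q1 : pushE π1 f1 →ₗ[R] B3 := (pushN π1 f1).liftQ (p1.comp (LinearMap.snd R C1 B21))
    (by rintro _ ⟨u, rfl⟩; simp [pf1])
  let q2 : pushE π2 f2 →ₗ[R] B3 := (pushN π2 f2).liftQ (p2.comp (LinearMap.snd R C1 B22))
    (by rintro _ ⟨u, rfl⟩; simp [pf2])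
  have hq1 : ∀ (c : C1) (x : B21), q1 (Submodule.Quotient.mk (c, x)) = p1 x := fun _ _ => rfl
  have hq2 : ∀ (c : C1) (x : B22), q2 (Submodule.Quotient.mk (c, x)) = p2 x := fun _ _ => rfl
  have hι1 : ∀ c : C1, ι1 c = Submodule.Quotient.mk (c, (0 : B21)) := fun _ => rfl
  have hι2 : ∀ c : C1, ι2 c = Submodule.Quotient.mk (c, (0 : B22)) := fun _ => rfl
  clear_value ι1 ι2 q1 q2
  refine ⟨ι1, ι2, q1, q2, hι1, hι2, hq1, hq2, ?_⟩
  have mem1 : ∀ z : B21 × B22, z ∈ fiberProd p1 p2 ↔ p1 z.1 = p2 z.2 := fun z => by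
    simp [fiberProd, sub_eq_zero]
  have memq : ∀ z : pushE π1 f1 × pushE π2 f2, z ∈ fiberProd q1 q2 ↔ q1 z.1 = q2 z.2 := fun z => by
    simp [fiberProd, sub_eq_zero]
  have memπ : ∀ z : B11 × B12, z ∈ fiberProd π1 π2 ↔ π1 z.1 = π2 z.2 := fun z => by
    simp [fiberProd, sub_eq_zero]
  let g1 : B21 →ₗ[R] pushE π1 f1 := (pushN π1 f1).mkQ.comp (LinearMap.inr R C1 B21)
  let g2 : B22 →ₗ[R] pushE π2 f2 := (pushN π2 f2).mkQ.comp (LinearMap.inr R C1 B22)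
  have hg1 : ∀ x, g1 x = Submodule.Quotient.mk ((0 : C1), x) := fun _ => rfl
  have hg2 : ∀ x, g2 x = Submodule.Quotient.mk ((0 : C1), x) := fun _ => rfl
  clear_value g1 g2
  have gι1 : ∀ x c, g1 x = ι1 c ↔ ∃ u, π1 u = c ∧ f1 u = x := fun x c => by
    rw [hg1, hι1, eq_comm, Submodule.Quotient.eq]
    constructor
    · rintro ⟨u, hu⟩
      simp only [LinearMap.prod_apply, Function.prod_apply, Prod.mk_sub_mk, Prod.mk.injEq,
        LinearMap.neg_apply, zero_sub, sub_zero, neg_inj] at hu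
      exact ⟨u, hu⟩
    · rintro ⟨u, rfl, rfl⟩
      exact ⟨u, by simp⟩
  have gι2 : ∀ x c, g2 x = ι2 c ↔ ∃ u, π2 u = c ∧ f2 u = x := fun x c => by
    rw [hg2, hι2, eq_comm, Submodule.Quotient.eq]
    constructor
    · rintro ⟨u, hu⟩
      simp only [LinearMap.prod_apply, Function.prod_apply, Prod.mk_sub_mk, Prod.mk.injEq,
        LinearMap.neg_apply, zero_sub, sub_zero, neg_inj] at hu
      exact ⟨u, hu⟩
    · rintro ⟨u, rfl, rfl⟩
      exact ⟨u, by simp⟩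
  have qg1 : ∀ x, q1 (g1 x) = p1 x := fun x => by rw [hg1, hq1]
  have qg2 : ∀ x, q2 (g2 x) = p2 x := fun x => by rw [hg2, hq2]
  have qι1 : ∀ x, q1 (ι1 x) = 0 := fun x => by rw [hι1, hq1, map_zero]
  have qι2 : ∀ x, q2 (ι2 x) = 0 := fun x => by rw [hι2, hq2, map_zero]
  have dec1 : ∀ e, ∃ c x, e = ι1 c + g1 x := fun e => by
    obtain ⟨⟨c, x⟩, rfl⟩ := Submodule.Quotient.mk_surjective _ e
    refine ⟨c, x, ?_⟩
    rw [hι1, hg1, ← Submodule.Quotient.mk_add]; simp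
  have dec2 : ∀ e, ∃ c x, e = ι2 c + g2 x := fun e => by
    obtain ⟨⟨c, x⟩, rfl⟩ := Submodule.Quotient.mk_surjective _ e
    refine ⟨c, x, ?_⟩
    rw [hι2, hg2, ← Submodule.Quotient.mk_add]; simp
  let r : fiberProd p1 p2 →ₗ[R] fiberProd q1 q2 :=
    (g1.prodMap g2).restrict (fun z hz => by
      rw [memq]; rw [mem1] at hz; simpa [qg1, qg2] using hz)
  have hr : ∀ z, (r z : pushE π1 f1 × pushE π2 f2) = (g1 z.1.1, g2 z.1.2) := fun _ => rfl
  clear_value r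
  let t0 : fiberProd p1 p2 →ₗ[R] baerQuot q1 q2 ι1 ι2 :=
    (Submodule.comap (fiberProd q1 q2).subtype (diagIm ι1 ι2)).mkQ.comp r
  have ht0 : ∀ z, t0 z = Submodule.Quotient.mk (r z) := fun _ => rfl
  clear_value t0
  have ker0 : ∀ z, t0 z = 0 ↔ ∃ u v, π1 u = π2 v ∧ f1 u = z.1.1 ∧ f2 v = z.1.2 := fun z => by
    rw [ht0, Submodule.Quotient.mk_eq_zero, Submodule.mem_comap]
    constructor
    · rintro ⟨c, hc⟩
      have hc : (ι1 c, ι2 c) = (g1 z.1.1, g2 z.1.2) := hc.trans (hr z)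
      rw [Prod.mk.injEq] at hc
      obtain ⟨u, hu, hu'⟩ := (gι1 _ _).1 hc.1.symm
      obtain ⟨v, hv, hv'⟩ := (gι2 _ _).1 hc.2.symm
      exact ⟨u, v, hu.trans hv.symm, hu', hv'⟩
    · rintro ⟨u, v, h, hu, hv⟩
      refine ⟨π1 u, ?_⟩
      change (ι1 (π1 u), ι2 (π1 u)) = (r z : pushE π1 f1 × pushE π2 f2)
      rw [hr, Prod.mk.injEq]
      exact ⟨((gι1 _ _).2 ⟨u, rfl, hu⟩).symm, ((gι2 _ _).2 ⟨v, h.symm, hv⟩).symm⟩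
  let t1 : baerQuot p1 p2 (f1.comp i1) (f2.comp i2) →ₗ[R] baerQuot q1 q2 ι1 ι2 :=
    Submodule.liftQ _ t0 (by
      rintro z ⟨a, ha⟩
      rw [LinearMap.mem_ker, ker0]
      exact ⟨i1 a, i2 a, by rw [pi1, pi2], congrArg Prod.fst ha, congrArg Prod.snd ha⟩)
  have ht1 : ∀ z, t1 (Submodule.Quotient.mk z) = t0 z := fun _ => rfl
  clear_value t1
  let t : rabiF i1 i2 π1 π2 f1 f2 p1 p2 →ₗ[R] baerQuot q1 q2 ι1 ι2 :=
    Submodule.liftQ _ t1 (by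
      rintro _ ⟨z, ⟨⟨u, v⟩, huv, h⟩, rfl⟩
      rw [LinearMap.mem_ker]
      refine (ht1 z).trans ((ker0 z).2 ?_)
      exact ⟨u, v, (memπ _).1 huv, congrArg Prod.fst h, congrArg Prod.snd h⟩)
  have ht : ∀ z, t (Submodule.Quotient.mk (Submodule.Quotient.mk z)) = t0 z := fun z => ht1 z
  clear_value t
  have tinj : Function.Injective t := by
    rw [injective_iff_map_eq_zero]
    intro x hx
    obtain ⟨y, rfl⟩ := Submodule.Quotient.mk_surjective _ x
    obtain ⟨z, rfl⟩ := Submodule.Quotient.mk_surjective _ y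
    rw [ht, ker0] at hx
    obtain ⟨u, v, h, hu, hv⟩ := hx
    rw [Submodule.Quotient.mk_eq_zero]
    exact ⟨z, ⟨(u, v), (memπ _).2 h, Prod.ext hu hv⟩, rfl⟩
  have tsurj : Function.Surjective t := by
    intro w
    obtain ⟨⟨⟨e1, e2⟩, he⟩, rfl⟩ := Submodule.Quotient.mk_surjective _ w
    obtain ⟨c1, x, rfl⟩ := dec1 e1
    obtain ⟨c2, y, rfl⟩ := dec2 e2
    have he' := (memq _).1 he
    simp only [map_add, qι1, qι2, qg1, qg2, zero_add] at he'
    obtain ⟨u, hu⟩ := hπ1 (c1 - c2)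
    have hz : (x + f1 u, y) ∈ fiberProd p1 p2 := (mem1 _).2 (by simp [pf1, he'])
    refine ⟨Submodule.Quotient.mk (Submodule.Quotient.mk ⟨_, hz⟩), ?_⟩
    rw [ht, ht0, eq_comm, Submodule.Quotient.eq]
    refine ⟨c2, ?_⟩
    change (ι1 c2, ι2 c2) = (ι1 c1 + g1 x, ι2 c2 + g2 y) - (r ⟨_, hz⟩ : pushE π1 f1 × pushE π2 f2)
    have h1 : g1 (f1 u) = ι1 c1 - ι1 c2 := by
      rw [← map_sub]; exact (gι1 _ _).2 ⟨u, hu, rfl⟩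
    rw [hr, Prod.mk_sub_mk, map_add, h1]
    refine Prod.ext ?_ ?_
    · simp only; abel
    · simp only; abel
  have tbij : Function.Bijective t := ⟨tinj, tsurj⟩
  refine ⟨LinearEquiv.ofBijective t tbij, ?_, ?_⟩
  · intro c h
    obtain ⟨u, rfl⟩ := hπ1 c
    have hz : (f1 u, f2 0) ∈ fiberProd p1 p2 := (mem1 _).2 (by simp [pf1])
    have := hφ u 0 hz
    rw [map_zero, sub_zero] at this
    rw [LinearEquiv.ofBijective_apply, this, ht, ht0]
    congr 1
    apply Subtype.ext
    rw [hr]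
    refine Prod.ext ((gι1 _ _).2 ⟨u, rfl, rfl⟩) ?_
    simp
  · let q : baerQuot q1 q2 ι1 ι2 →ₗ[R] B3 :=
      Submodule.liftQ _ ((q1.comp (LinearMap.fst R _ _)).comp (fiberProd q1 q2).subtype) (by
        rintro z ⟨c, hc⟩
        have : ι1 c = z.1.1 := congrArg Prod.fst hc
        change q1 z.1.1 = 0
        rw [← this, qι1])
    have hq : ∀ z : fiberProd q1 q2, q (Submodule.Quotient.mk z) = q1 z.1.1 := fun _ => rfl
    clear_value q
    refine ⟨q, hq, fun x => ?_⟩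
    obtain ⟨y, rfl⟩ := Submodule.Quotient.mk_surjective _ x
    obtain ⟨z, rfl⟩ := Submodule.Quotient.mk_surjective _ y
    rw [LinearEquiv.ofBijective_apply, ht, ht0, hq, hpbar, hr, qg1]

end
end
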